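/- arXiv:2505.19537 — 5 statements merged into one kernel-verified Lean document; each statement's English description precedes it below -/
import Mathlib

section
/- Let n, m be positive integers, P an n×n real matrix, R an m×m real matrix, Q an n×m real matrix, β ∈ (-1,1) and h > 0, and set c = 1/(1-β) and c' = h(1+β)/(2(1-β)^3). Define J = [[-P, -Q],[Qᵀ, R]], N_xx = c·P + c'·(P·P - Q·Qᵀ), N_xy = c·Q + c'·(P·Q - Q·R), N_yx = c·Qᵀ + c'·(Qᵀ·P - R·Qᵀ), N_yy = c·R + c'·(Qᵀ·Q - R·R), and further N'_yx = N_yx - (h/(1-β)²)·Qᵀ·P and N'_yy = N_yy - (h/(1-β)²)·Qᵀ·Q. Then [[-N_xx, -N_xy],[N'_yx, N'_yy]] = (c·I - c'·J)·J - (h/(1-β)²)·[[0, 0],[Qᵀ·P, Qᵀ·Q]]. -/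
open Matrix

section BlockAlgebra

variable {m n S α : Type*}

theorem fromBlocks_sub {l o : Type*} [Sub α]
    (A A' : Matrix n l α) (B B' : Matrix n m α) (C C' : Matrix o l α) (D D' : Matrix o m α) :
    fromBlocks A B C D - fromBlocks A' B' C' D' =
      fromBlocks (A - A') (B - B') (C - C') (D - D') := by
  ext (_ | _) (_ | _) <;> rfl

theorem smul_one_sub_smul_mul_self [NonAssocRing α] [SMul S α] [IsScalarTower S α α]
    (a b : S) (x : α) : (a • (1 : α) - b • x) * x = a • x - b • (x * x) := by
  rw [sub_mul, smul_one_mul, smul_mul_assoc]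

variable [Fintype m] [Fintype n] [DecidableEq m] [DecidableEq n]
  [Monoid S] [NonAssocRing α] [DistribMulAction S α] [IsScalarTower S α α]

/-- With `T = Qᵀ`, this is the Jacobian of the simultaneous heavy ball model, in blocks. -/
theorem smul_one_sub_smul_fromBlocks_mul_self (a b : S) (P : Matrix n n α)
    (Q : Matrix n m α) (T : Matrix m n α) (R : Matrix m m α) :
    (a • (1 : Matrix (n ⊕ m) (n ⊕ m) α) - b • fromBlocks (-P) (-Q) T R) *
        fromBlocks (-P) (-Q) T R =
      fromBlocks (-(a • P + b • (P * P - Q * T))) (-(a • Q + b • (P * Q - Q * R)))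
        (a • T + b • (T * P - R * T)) (a • R + b • (T * Q - R * R)) := by
  have sq_blocks : fromBlocks (-P) (-Q) T R * fromBlocks (-P) (-Q) T R =
      fromBlocks (P * P - Q * T) (P * Q - Q * R) (R * T - T * P) (R * R - T * Q) := by
    simp only [fromBlocks_multiply, Matrix.neg_mul, Matrix.mul_neg, neg_neg, ← sub_eq_add_neg,
      neg_add_eq_sub]
  rw [smul_one_sub_smul_mul_self, sq_blocks, fromBlocks_smul, fromBlocks_smul, fromBlocks_sub]
  congr 1
  · rw [smul_neg, neg_add']
  · rw [smul_neg, neg_add']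
  · rw [← neg_sub (T * P), smul_neg, sub_neg_eq_add]
  · rw [← neg_sub (T * Q), smul_neg, sub_neg_eq_add]

theorem stmt_1_general (a b k : S) (P : Matrix n n α)
    (Q : Matrix n m α) (T : Matrix m n α) (R : Matrix m m α) :
    fromBlocks (-(a • P + b • (P * P - Q * T))) (-(a • Q + b • (P * Q - Q * R)))
        (a • T + b • (T * P - R * T) - k • (T * P))
        (a • R + b • (T * Q - R * R) - k • (T * Q)) =
      (a • (1 : Matrix (n ⊕ m) (n ⊕ m) α) - b • fromBlocks (-P) (-Q) T R) *
          fromBlocks (-P) (-Q) T R -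
        k • fromBlocks 0 0 (T * P) (T * Q) := by
  rw [smul_one_sub_smul_fromBlocks_mul_self, fromBlocks_smul, fromBlocks_sub]
  simp only [smul_zero, sub_zero]

end BlockAlgebra

/-- Jacobian identity for the continuous-time model of alternating
heavy ball momentum (Proposition 4.2 of the paper). -/
theorem stmt_1 (n m : ℕ) (hn : 0 < n) (hm : 0 < m)
    (P : Matrix (Fin n) (Fin n) ℝ) (R : Matrix (Fin m) (Fin m) ℝ)
    (Q : Matrix (Fin n) (Fin m) ℝ)
    (β h : ℝ) (hβ₁ : -1 < β) (hβ₂ : β < 1) (hh : 0 < h)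
    (c c' : ℝ) (hc : c = 1 / (1 - β)) (hc' : c' = h * (1 + β) / (2 * (1 - β) ^ 3))
    (J : Matrix (Fin n ⊕ Fin m) (Fin n ⊕ Fin m) ℝ)
    (hJ : J = Matrix.fromBlocks (-P) (-Q) Qᵀ R)
    (Nxx : Matrix (Fin n) (Fin n) ℝ) (hNxx : Nxx = c • P + c' • (P * P - Q * Qᵀ))
    (Nxy : Matrix (Fin n) (Fin m) ℝ) (hNxy : Nxy = c • Q + c' • (P * Q - Q * R))
    (Nyx : Matrix (Fin m) (Fin n) ℝ) (hNyx : Nyx = c • Qᵀ + c' • (Qᵀ * P - R * Qᵀ))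
    (Nyy : Matrix (Fin m) (Fin m) ℝ) (hNyy : Nyy = c • R + c' • (Qᵀ * Q - R * R))
    (Nyx' : Matrix (Fin m) (Fin n) ℝ) (hNyx' : Nyx' = Nyx - (h / (1 - β) ^ 2) • (Qᵀ * P))
    (Nyy' : Matrix (Fin m) (Fin m) ℝ) (hNyy' : Nyy' = Nyy - (h / (1 - β) ^ 2) • (Qᵀ * Q)) :
    Matrix.fromBlocks (-Nxx) (-Nxy) Nyx' Nyy' =
      (c • (1 : Matrix (Fin n ⊕ Fin m) (Fin n ⊕ Fin m) ℝ) - c' • J) * J -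
        (h / (1 - β) ^ 2) • Matrix.fromBlocks 0 0 (Qᵀ * P) (Qᵀ * Q) := by
  subst hNyx' hNyy' hNxx hNxy hNyx hNyy hJ
  exact stmt_1_general c c' (h / (1 - β) ^ 2) P Q Qᵀ R
end

section
/- Let A be an invertible n×n real matrix and β ∈ (-1,0). For h > 0 set c₁ = h(1+β)/(2(1-β)³), c₂ = 1/(1-β), c₃ = h(1-3β)/(2(1-β)³), and let M_A(h) be the 2n×2n real block matrix [[c₁·A·Aᵀ, -c₂·A],[c₂·Aᵀ, -c₃·Aᵀ·A]]. Then there exists h₀ > 0 such that for all 0 < h < h₀, every complex eigenvalue of M_A(h) has strictly negative real part. -/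
open Matrix

/-!
If `(u, v)` is an eigenvector of the Jacobian for the eigenvalue `μ`, eliminating `v` and pairing
with `u` gives a real quadratic equation for `μ`. With `y = Aᴴ u` it reads
`‖u‖² μ² + (c₃ - c₁) ‖y‖² μ + (c₂² ‖y‖² - c₁ c₃ ‖A y‖²) = 0`.
The damping coefficient `c₃ - c₁` is positive because the momentum is negative, and the constant
term is positive for small `h` because `c₁ c₃ = O(h²)`, so both roots lie in the open left
half-plane.
-/

open scoped InnerProductSpace InnerProduct Topology

theorem re_neg_of_quadratic_eq_zero {p q r : ℝ} {μ : ℂ} (hp : 0 ≤ p) (hq : 0 < q) (hr : 0 < r)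
    (hμ : (p : ℂ) * μ ^ 2 + q * μ + r = 0) : μ.re < 0 := by
  have h_re : p * (μ.re ^ 2 - μ.im ^ 2) + q * μ.re + r = 0 := by
    simpa [sq] using congrArg Complex.re hμ
  have h_im : μ.im * (2 * p * μ.re + q) = 0 := by
    have := congrArg Complex.im hμ
    simp only [sq, Complex.add_im, Complex.mul_im, Complex.ofReal_re, Complex.ofReal_im,
      Complex.zero_im] at this
    linear_combination this
  by_contra! h_nonneg
  have im_eq_zero : μ.im = 0 := (mul_eq_zero.mp h_im).resolve_right (by positivity)
  have : 0 < p * μ.re ^ 2 + q * μ.re + r := by positivity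
  simp only [im_eq_zero] at h_re
  linarith

section HilbertSpace

variable {𝕜 E F : Type*} [RCLike 𝕜]
  [NormedAddCommGroup E] [InnerProductSpace 𝕜 E] [CompleteSpace E]
  [NormedAddCommGroup F] [InnerProductSpace 𝕜 F] [CompleteSpace F]

theorem saddle_eigenvalue_quadratic (T : F →L[𝕜] E) {a b c μ : 𝕜} {u : E} {v : F}
    (hu : a • T ((T†) u) - b • T v = μ • u) (hv : b • (T†) u - c • (T†) (T v) = μ • v) :
    (‖u‖ : 𝕜) ^ 2 * μ ^ 2 + (c - a) * (‖(T†) u‖ : 𝕜) ^ 2 * μ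
      + (b ^ 2 * (‖(T†) u‖ : 𝕜) ^ 2 - a * c * (‖T ((T†) u)‖ : 𝕜) ^ 2) = 0 := by
  set y := (T†) u with hy
  have hTv : b • T v = a • T y - μ • u := by rw [← hu]; abel
  -- Apply `b T` to the second equation and substitute the first.
  have eliminated : b ^ 2 • T y - c • T ((T†) (a • T y - μ • u))
      = μ • (a • T y - μ • u) := by
    rw [← hTv]
    have := congrArg (fun z ↦ b • T z) hv
    simp only [map_sub, map_smul] at this ⊢
    linear_combination (norm := module) this
  have inner_Ty : ⟪u, T y⟫_𝕜 = (‖y‖ : 𝕜) ^ 2 := by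
    rw [← ContinuousLinearMap.adjoint_inner_left, ← hy, inner_self_eq_norm_sq_to_K]
  have inner_TTTy : ⟪u, T ((T†) (T y))⟫_𝕜 = (‖T y‖ : 𝕜) ^ 2 := by
    rw [← ContinuousLinearMap.adjoint_inner_left, ContinuousLinearMap.adjoint_inner_right,
      inner_self_eq_norm_sq_to_K]
  have paired := congrArg (fun z ↦ ⟪u, z⟫_𝕜) eliminated
  simp only [map_sub, map_smul, inner_sub_right, inner_smul_right, ← hy, inner_Ty, inner_TTTy,
    inner_self_eq_norm_sq_to_K] at paired
  linear_combination paired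

end HilbertSpace

section ComplexHilbertSpace

variable {E F : Type*}
  [NormedAddCommGroup E] [InnerProductSpace ℂ E] [CompleteSpace E]
  [NormedAddCommGroup F] [InnerProductSpace ℂ F] [CompleteSpace F]

theorem re_neg_of_saddle_eigenvector {T : F →L[ℂ] E} (hT : Function.Injective T)
    (hT' : Function.Injective (T†)) {a b c : ℝ} (hb : b ≠ 0) (hac : a < c)
    (hT_norm : a * c * ‖T‖ ^ 2 < b ^ 2) {μ : ℂ} {u : E} {v : F} (huv : u ≠ 0 ∨ v ≠ 0)
    (hu : (a : ℂ) • T ((T†) u) - (b : ℂ) • T v = μ • u)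
    (hv : (b : ℂ) • (T†) u - (c : ℂ) • (T†) (T v) = μ • v) : μ.re < 0 := by
  have u_ne_zero : u ≠ 0 := by
    rintro rfl
    have hTv : T v = 0 := by simpa [hb] using hu
    exact huv.elim (· rfl) (· ((map_eq_zero_iff T hT).mp hTv))
  have norm_y_pos : 0 < ‖(T†) u‖ := norm_pos_iff.mpr ((map_ne_zero_iff _ hT').mpr u_ne_zero)
  have constant_pos : 0 < b ^ 2 * ‖(T†) u‖ ^ 2 - a * c * ‖T ((T†) u)‖ ^ 2 := by
    rw [sub_pos]
    rcases le_total 0 (a * c) with h_nonneg | h_nonpos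
    · calc a * c * ‖T ((T†) u)‖ ^ 2 ≤ a * c * (‖T‖ * ‖(T†) u‖) ^ 2 := by
            gcongr; exact T.le_opNorm _
        _ = a * c * ‖T‖ ^ 2 * ‖(T†) u‖ ^ 2 := by ring
        _ < b ^ 2 * ‖(T†) u‖ ^ 2 := by gcongr
    · calc a * c * ‖T ((T†) u)‖ ^ 2 ≤ 0 := mul_nonpos_of_nonpos_of_nonneg h_nonpos (sq_nonneg _)
        _ < b ^ 2 * ‖(T†) u‖ ^ 2 := by positivity
  refine re_neg_of_quadratic_eq_zero (sq_nonneg ‖u‖)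
    (mul_pos (sub_pos.mpr hac) (pow_pos norm_y_pos 2)) constant_pos ?_
  push_cast
  exact saddle_eigenvalue_quadratic T hu hv

end ComplexHilbertSpace

section Matrix

variable {m n R S : Type*} [Fintype m] [Fintype n]

/-- The Jacobian of a bilinear saddle-point flow with payoff matrix `B`: the off-diagonal blocks are
the simultaneous gradient field scaled by `b`, the diagonal blocks the step-size corrections. The
signs are chosen so that alternating heavy ball has `b, c > 0`, and `a > 0` for momentum in
`(-1, 0)`. -/
def saddleMatrix [Ring R] [StarRing R] (B : Matrix m n R) (a b c : R) :
    Matrix (m ⊕ n) (m ⊕ n) R :=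
  fromBlocks (a • (B * Bᴴ)) (-(b • B)) (b • Bᴴ) (-(c • (Bᴴ * B)))

theorem saddleMatrix_map [Ring R] [StarRing R] [Ring S] [StarRing S] (f : R →+* S)
    (hf : Function.Semiconj f star star) (B : Matrix m n R) (a b c : R) :
    (saddleMatrix B a b c).map f = saddleMatrix (B.map f) (f a) (f b) (f c) := by
  simp only [saddleMatrix, fromBlocks_map, Matrix.map_neg f (map_neg f),
    Matrix.map_smulₛₗ f f _ (map_mul f _), Matrix.map_mul, conjTranspose_map f hf]

theorem saddleMatrix_map_ofReal (A : Matrix m n ℝ) (a b c : ℝ) :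
    saddleMatrix (A.map Complex.ofReal) (a : ℂ) b c =
      (fromBlocks (a • (A * Aᵀ)) (-(b • A)) (b • Aᵀ) (-(c • (Aᵀ * A)))).map Complex.ofReal := by
  rw [← conjTranspose_eq_transpose_of_trivial A]
  exact (saddleMatrix_map Complex.ofRealHom (fun x ↦ (Complex.conj_ofReal x).symm) A a b c).symm

theorem saddleMatrix_mulVec [Ring R] [StarRing R] (B : Matrix m n R) (a b c : R)
    (u : m → R) (v : n → R) :
    saddleMatrix B a b c *ᵥ Sum.elim u v =
      Sum.elim (a • B *ᵥ (Bᴴ *ᵥ u) - b • B *ᵥ v) (b • Bᴴ *ᵥ u - c • Bᴴ *ᵥ (B *ᵥ v)) := by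
  simp only [saddleMatrix, fromBlocks_mulVec, Sum.elim_comp_inl, Sum.elim_comp_inr, neg_mulVec,
    smul_mulVec, mulVec_mulVec, sub_eq_add_neg]

variable [DecidableEq n]

theorem exists_mulVec_eq_smul_of_mem_spectrum {K : Type*} [Field K]
    {M : Matrix n n K} {μ : K} (hμ : μ ∈ spectrum K M) : ∃ w ≠ 0, M *ᵥ w = μ • w := by
  rw [← Matrix.spectrum_toLin', ← Module.End.hasEigenvalue_iff_mem_spectrum] at hμ
  obtain ⟨w, hw⟩ := hμ.exists_hasEigenvector
  exact ⟨w, hw.2, hw.apply_eq_smul⟩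

theorem toEuclideanCLM_injective_of_isUnit {𝕜 : Type*} [RCLike 𝕜] {B : Matrix n n 𝕜}
    (hB : IsUnit B) : Function.Injective (toEuclideanCLM (𝕜 := 𝕜) B) :=
  ((WithLp.toLp_injective 2).comp (mulVec_injective_of_isUnit hB)).comp (WithLp.ofLp_injective 2)

theorem re_neg_of_mem_spectrum_saddleMatrix {B : Matrix n n ℂ} (hB : IsUnit B) {a b c : ℝ}
    (hb : b ≠ 0) (hac : a < c) (hB_norm : a * c * ‖toEuclideanCLM (𝕜 := ℂ) B‖ ^ 2 < b ^ 2)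
    {μ : ℂ} (hμ : μ ∈ spectrum ℂ (saddleMatrix B (a : ℂ) b c)) : μ.re < 0 := by
  obtain ⟨w, w_ne_zero, hw⟩ := exists_mulVec_eq_smul_of_mem_spectrum hμ
  obtain ⟨u, v, rfl⟩ : ∃ u v, w = Sum.elim u v := ⟨_, _, (Sum.elim_comp_inl_inr w).symm⟩
  rw [saddleMatrix_mulVec] at hw
  have adjoint_eq : (toEuclideanCLM (𝕜 := ℂ) B)† = toEuclideanCLM (𝕜 := ℂ) Bᴴ :=
    (map_star (toEuclideanCLM (n := n) (𝕜 := ℂ)) B).symm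
  refine re_neg_of_saddle_eigenvector (u := WithLp.toLp 2 u) (v := WithLp.toLp 2 v)
    (toEuclideanCLM_injective_of_isUnit hB) ?_ hb hac hB_norm ?_ ?_ ?_
  · rw [adjoint_eq]
    exact toEuclideanCLM_injective_of_isUnit ((isUnit_conjTranspose B).mpr hB)
  · contrapose! w_ne_zero
    rw [(WithLp.toLp_eq_zero 2).mp w_ne_zero.1, (WithLp.toLp_eq_zero 2).mp w_ne_zero.2,
      Sum.elim_zero_zero]
  · rw [adjoint_eq]
    exact congrArg (WithLp.toLp 2) (funext fun i ↦ congrFun hw (Sum.inl i))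
  · rw [adjoint_eq]
    exact congrArg (WithLp.toLp 2) (funext fun i ↦ congrFun hw (Sum.inr i))

theorem stmt_4_general {B : Matrix n n ℂ} (hB : IsUnit B) {β : ℝ} (hβ : β < 0) :
    ∃ h₀ : ℝ, 0 < h₀ ∧ ∀ h : ℝ, 0 < h → h < h₀ →
      ∀ μ ∈ spectrum ℂ (saddleMatrix B
        ((h * (1 + β) / (2 * (1 - β) ^ 3) : ℝ) : ℂ)
        ((1 / (1 - β) : ℝ) : ℂ)
        ((h * (1 - 3 * β) / (2 * (1 - β) ^ 3) : ℝ) : ℂ)),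
      μ.re < 0 := by
  have one_sub_pos : 0 < 1 - β := by linarith
  have h_small : ∀ᶠ h : ℝ in 𝓝[>] 0,
      h * (1 + β) / (2 * (1 - β) ^ 3) * (h * (1 - 3 * β) / (2 * (1 - β) ^ 3))
        * ‖toEuclideanCLM (𝕜 := ℂ) B‖ ^ 2 < (1 / (1 - β)) ^ 2 := by
    refine nhdsWithin_le_nhds (ContinuousAt.eventually_lt (by fun_prop) continuousAt_const ?_)
    simpa using pow_pos one_sub_pos 2
  obtain ⟨h₀, h₀_pos, bound⟩ := (nhdsGT_basis (0 : ℝ)).eventually_iff.mp h_small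
  refine ⟨h₀, h₀_pos, fun h h_pos h_lt μ hμ ↦ ?_⟩
  have damping_pos : h * (1 + β) / (2 * (1 - β) ^ 3) < h * (1 - 3 * β) / (2 * (1 - β) ^ 3) := by
    gcongr
    linarith
  exact re_neg_of_mem_spectrum_saddleMatrix hB (by positivity) damping_pos
    (bound ⟨h_pos, h_lt⟩) hμ

end Matrix

/-- for an invertible matrix A and negative momentum β, the Jacobian
of continuous-time alternating heavy ball in the bilinear game has all eigenvalues
with strictly negative real part for all sufficiently small step sizes
(Lemma B.2 / Proposition 3.2 of the paper). -/
theorem stmt_4 (n : ℕ) (A : Matrix (Fin n) (Fin n) ℝ) (hA : IsUnit A)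
    (β : ℝ) (hβ₁ : -1 < β) (hβ₂ : β < 0) :
    ∃ h₀ : ℝ, 0 < h₀ ∧ ∀ h : ℝ, 0 < h → h < h₀ →
      ∀ μ : ℂ, μ ∈ spectrum ℂ
        ((Matrix.fromBlocks
            ((h * (1 + β) / (2 * (1 - β) ^ 3)) • (A * Aᵀ))
            (-((1 / (1 - β)) • A))
            ((1 / (1 - β)) • Aᵀ)
            (-((h * (1 - 3 * β) / (2 * (1 - β) ^ 3)) • (Aᵀ * A)))).map Complex.ofReal) →
        μ.re < 0 := by
  have hA' : IsUnit (A.map Complex.ofReal) := hA.map Complex.ofRealHom.mapMatrix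
  simpa only [saddleMatrix_map_ofReal] using stmt_4_general hA' hβ₂
end

section
/- Let λ ∈ ℂ satisfy Re(λ) < 0 and (Im λ)² > (Re λ)², let β ∈ (-1,1), and let h be a real number with 0 < h < (2(1-β)²/(1+β)) · |Re λ| / ((Im λ)² - (Re λ)²). Set c = 1/(1-β) and c' = h(1+β)/(2(1-β)³). Then Re( (c - c'·λ)·λ ) < 0; equivalently, c·Re(λ) + c'·((Im λ)² - (Re λ)²) < 0. -/
/-!
Expanding `(c - c' z) z`, the real part is `c Re z + c' ((Im z)² - (Re z)²)`: the linear term is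
stabilizing when `0 < c` and `Re z < 0`, while the quadratic one is destabilizing when `0 < c'` and
`|Re z| < |Im z|`. The first wins exactly when `c' / c < |Re z| / ((Im z)² - (Re z)²)`. For the
heavy ball coefficients, `c' / c = h (1 + β) / (2 (1 - β)²)`, so this is precisely the bound on the
step size `h`.
-/

theorem re_ofReal_sub_ofReal_mul_mul_self (c c' : ℝ) (z : ℂ) :
    (((c : ℂ) - (c' : ℂ) * z) * z).re = c * z.re + c' * (z.im ^ 2 - z.re ^ 2) := by
  simp only [Complex.mul_re, Complex.sub_re, Complex.sub_im, Complex.mul_im,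
    Complex.ofReal_re, Complex.ofReal_im]
  ring

section OrderedField

variable {K : Type*} [Field K] [LinearOrder K] [IsStrictOrderedRing K]

theorem mul_add_mul_neg_iff_lt_mul_abs_div {c c' x d : K} (hx : x ≤ 0) (hd : 0 < d) :
    c * x + c' * d < 0 ↔ c' < c * (|x| / d) := by
  rw [abs_of_nonpos hx, ← mul_div_assoc, lt_div_iff₀ hd, mul_neg, lt_neg_iff_add_neg']

theorem heavyBall_coeff_lt_iff_stepSize_lt {β h r : K} (hβ₁ : -1 < β) (hβ₂ : β < 1) :
    h * (1 + β) / (2 * (1 - β) ^ 3) < 1 / (1 - β) * r ↔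
      h < 2 * (1 - β) ^ 2 / (1 + β) * r := by
  have one_sub_pos : 0 < 1 - β := sub_pos.mpr hβ₂
  have one_add_pos : 0 < 1 + β := neg_lt_iff_pos_add'.mp hβ₁
  have scale_pos : 0 < (1 + β) / (2 * (1 - β) ^ 3) :=
    div_pos one_add_pos (mul_pos two_pos (pow_pos one_sub_pos 3))
  have scale_mul_h : (1 + β) / (2 * (1 - β) ^ 3) * h = h * (1 + β) / (2 * (1 - β) ^ 3) := by
    ring
  have scale_mul_bound :
      (1 + β) / (2 * (1 - β) ^ 3) * (2 * (1 - β) ^ 2 / (1 + β) * r) = 1 / (1 - β) * r := by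
    field_simp
  rw [← scale_mul_h, ← scale_mul_bound, mul_lt_mul_iff_right₀ scale_pos]

end OrderedField

/-- core complex inequality in the proof of Theorem 4.3 of the paper. -/
theorem stmt_5 (z : ℂ) (hre : z.re < 0) (him : z.re ^ 2 < z.im ^ 2)
    (β : ℝ) (hβ₁ : -1 < β) (hβ₂ : β < 1)
    (h : ℝ) (hh₁ : 0 < h)
    (hh₂ : h < 2 * (1 - β) ^ 2 / (1 + β) * (|z.re| / (z.im ^ 2 - z.re ^ 2)))
    (c c' : ℝ) (hc : c = 1 / (1 - β)) (hc' : c' = h * (1 + β) / (2 * (1 - β) ^ 3)) :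
    (((c : ℂ) - (c' : ℂ) * z) * z).re < 0 ∧
      c * z.re + c' * (z.im ^ 2 - z.re ^ 2) < 0 := by
  rw [re_ofReal_sub_ofReal_mul_mul_self, and_self,
    mul_add_mul_neg_iff_lt_mul_abs_div hre.le (sub_pos.mpr him), hc, hc']
  exact (heavyBall_coeff_lt_iff_stepSize_lt hβ₁ hβ₂).mpr hh₂
end

section
/- Let J be a d×d real matrix such that every eigenvalue λ ∈ ℂ of J satisfies Re(λ) < 0 and (Im λ)² > (Re λ)². Let β ∈ (-1,1) and let h > 0 satisfy h < (2(1-β)²/(1+β)) · |Re λ| / ((Im λ)² - (Re λ)²) for every eigenvalue λ of J. Set c = 1/(1-β) and c' = h(1+β)/(2(1-β)³). Then every complex eigenvalue μ of the matrix (c·I - c'·J)·J satisfies Re(μ) < 0. -/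
open Matrix

/-!
By the polynomial spectral mapping theorem, the spectrum of `(c - c' a) a` consists of the numbers
`(c - c' z) z` with `z` in the spectrum of `a`. For real `c` and `c'`, such a number has real part
`c * z.re + c' * (z.im ^ 2 - z.re ^ 2)`. The first term is negative. The second is nonpositive when
`z.im ^ 2 ≤ z.re ^ 2`; otherwise the bound on `h` says exactly that the first term dominates it.
-/

theorem spectrum_smul_one_sub_smul_mul_self {𝕜 A : Type*} [Field 𝕜] [IsAlgClosed 𝕜] [Ring A]
    [Algebra 𝕜 A] (a : A) {c c' : 𝕜} (hcc' : c ≠ 0 ∨ c' ≠ 0) :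
    spectrum 𝕜 ((c • 1 - c' • a) * a) = (fun z ↦ (c - c' * z) * z) '' spectrum 𝕜 a := by
  let p : Polynomial 𝕜 := Polynomial.C c - Polynomial.C c' * Polynomial.X
  have hp : p ≠ 0 := fun hp₀ ↦ by
    have hc : c = 0 := by simpa [p] using congrArg (Polynomial.coeff · 0) hp₀
    have hc' : c' = 0 := by simpa [p] using congrArg (Polynomial.coeff · 1) hp₀
    exact hcc'.elim (· hc) (· hc')
  have hdeg : 0 < (p * Polynomial.X).degree := by
    rw [← Polynomial.natDegree_pos_iff_degree_pos, Polynomial.natDegree_mul_X hp]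
    exact Nat.succ_pos _
  simpa [p, Algebra.smul_def] using spectrum.map_polynomial_aeval_of_degree_pos a _ hdeg

theorem map_smul_one_sub_smul_mul_self {n R S : Type*} [Fintype n] [DecidableEq n] [Ring R]
    [Ring S] (f : R →+* S) (M : Matrix n n R) (c c' : R) :
    ((c • (1 : Matrix n n R) - c' • M) * M).map f =
      (f c • (1 : Matrix n n S) - f c' • M.map f) * M.map f := by
  rw [Matrix.map_mul, Matrix.map_sub f (map_sub f), Matrix.map_smul' f _ _ (map_mul f),
    Matrix.map_smul' f _ _ (map_mul f), Matrix.map_one f (map_zero f) (map_one f)]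

theorem re_ofReal_sub_ofReal_mul_self_mul_self (c c' : ℝ) (z : ℂ) :
    (((c : ℂ) - c' * z) * z).re = c * z.re + c' * (z.im ^ 2 - z.re ^ 2) := by
  simp only [Complex.mul_re, Complex.sub_re, Complex.sub_im, Complex.mul_im, Complex.ofReal_re,
    Complex.ofReal_im]
  ring

section StepSize

variable {β h x y : ℝ}

theorem step_mul_sq_sub_sq_lt (hβ₁ : -1 < β) (hβ₂ : β < 1) (hh : 0 ≤ h) (hx : x < 0)
    (hstep : x ^ 2 < y ^ 2 → h < 2 * (1 - β) ^ 2 / (1 + β) * (|x| / (y ^ 2 - x ^ 2))) :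
    h * ((1 + β) * (y ^ 2 - x ^ 2)) < 2 * (1 - β) ^ 2 * -x := by
  have h_add : 0 < 1 + β := by linarith
  rcases lt_or_ge (x ^ 2) (y ^ 2) with hxy | hyx
  · have : 0 < y ^ 2 - x ^ 2 := sub_pos.mpr hxy
    have h_lt := hstep hxy
    rwa [abs_of_neg hx, div_mul_div_comm, lt_div_iff₀ (by positivity)] at h_lt
  · have : 0 < 1 - β := sub_pos.mpr hβ₂
    calc
      h * ((1 + β) * (y ^ 2 - x ^ 2)) ≤ 0 :=
        mul_nonpos_of_nonneg_of_nonpos hh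
          (mul_nonpos_of_nonneg_of_nonpos h_add.le (sub_nonpos.mpr hyx))
      _ < 2 * (1 - β) ^ 2 * -x := mul_pos (by positivity) (neg_pos.mpr hx)

theorem momentum_mul_add_mul_sq_sub_sq_neg (hβ₁ : -1 < β) (hβ₂ : β < 1) (hh : 0 ≤ h) (hx : x < 0)
    (hstep : x ^ 2 < y ^ 2 → h < 2 * (1 - β) ^ 2 / (1 + β) * (|x| / (y ^ 2 - x ^ 2))) :
    1 / (1 - β) * x + h * (1 + β) / (2 * (1 - β) ^ 3) * (y ^ 2 - x ^ 2) < 0 := by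
  have : 0 < 1 - β := sub_pos.mpr hβ₂
  have h_lt := step_mul_sq_sub_sq_lt hβ₁ hβ₂ hh hx hstep
  calc
    1 / (1 - β) * x + h * (1 + β) / (2 * (1 - β) ^ 3) * (y ^ 2 - x ^ 2)
        = (h * ((1 + β) * (y ^ 2 - x ^ 2)) - 2 * (1 - β) ^ 2 * -x) / (2 * (1 - β) ^ 3) := by
      field_simp
      ring
    _ < 0 := div_neg_of_neg_of_pos (sub_neg.mpr h_lt) (by positivity)

end StepSize

theorem stmt_6_general {A : Type*} [Ring A] [Algebra ℂ A] (a : A)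
    (ha : ∀ z ∈ spectrum ℂ a, z.re < 0) {β h : ℝ} (hβ₁ : -1 < β) (hβ₂ : β < 1) (hh : 0 ≤ h)
    (hstep : ∀ z ∈ spectrum ℂ a, z.re ^ 2 < z.im ^ 2 →
      h < 2 * (1 - β) ^ 2 / (1 + β) * (|z.re| / (z.im ^ 2 - z.re ^ 2)))
    {c c' : ℝ} (hc : c = 1 / (1 - β)) (hc' : c' = h * (1 + β) / (2 * (1 - β) ^ 3)) :
    ∀ μ ∈ spectrum ℂ (((c : ℂ) • 1 - (c' : ℂ) • a) * a), μ.re < 0 := by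
  have hc_ne : (c : ℂ) ≠ 0 :=
    Complex.ofReal_ne_zero.mpr (hc ▸ one_div_ne_zero (sub_pos.mpr hβ₂).ne')
  rw [spectrum_smul_one_sub_smul_mul_self a (.inl hc_ne)]
  rintro _ ⟨z, hz, rfl⟩
  rw [re_ofReal_sub_ofReal_mul_self_mul_self, hc, hc']
  exact momentum_mul_add_mul_sq_sub_sq_neg hβ₁ hβ₂ hh (ha z hz) (hstep z hz)

/-- spectral content of Theorem 4.3 of the paper: under the
eigenvalue assumptions on J and the step-size bound, all eigenvalues of
(c·I - c'·J)·J have strictly negative real part. -/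
theorem stmt_6 (d : ℕ) (J : Matrix (Fin d) (Fin d) ℝ)
    (hJ : ∀ z : ℂ, z ∈ spectrum ℂ (J.map Complex.ofReal) →
      z.re < 0 ∧ z.re ^ 2 < z.im ^ 2)
    (β h : ℝ) (hβ₁ : -1 < β) (hβ₂ : β < 1) (hh : 0 < h)
    (hstep : ∀ z : ℂ, z ∈ spectrum ℂ (J.map Complex.ofReal) →
      h < 2 * (1 - β) ^ 2 / (1 + β) * (|z.re| / (z.im ^ 2 - z.re ^ 2)))
    (c c' : ℝ) (hc : c = 1 / (1 - β)) (hc' : c' = h * (1 + β) / (2 * (1 - β) ^ 3)) :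
    ∀ μ : ℂ, μ ∈ spectrum ℂ
        (((c • (1 : Matrix (Fin d) (Fin d) ℝ) - c' • J) * J).map Complex.ofReal) →
      μ.re < 0 := by
  exact map_smul_one_sub_smul_mul_self Complex.ofRealHom J c c' ▸
    stmt_6_general _ (fun z hz ↦ (hJ z hz).1) hβ₁ hβ₂ hh.le (fun z hz _ ↦ hstep z hz) hc hc'
end

section
/- Let r > 0 and D > 0 be real numbers and let h satisfy 0 < h < r/(2D). Define g : (-1,1) → ℝ by g(β) = -r/(1-β) + h·(1+β)·D/(2(1-β)³). Then there exists β* ∈ (0,1) such that g(β*) < g(β) for every β ∈ (-1,1) with β ≠ β*; that is, g attains a strict global minimum on (-1,1) at a strictly positive point. -/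
/-!
In the variable `u = 1 / (1 - β)`, which maps `(-∞, 1)` bijectively onto `(0, ∞)`, and with
`k = h * D`, the function to minimise is the cubic `p(u) = k * u ^ 3 - k / 2 * u ^ 2 - r * u`.
At a critical point `v` of `p`,
`p(u) - p(v) = k * (u - v) ^ 2 * (u + 2 * v - 1 / 2)`,
so a critical point `v ≥ 1 / 4` is the strict global minimum on `(0, ∞)`. The critical equation
also gives `r - 2 * k = k * (v - 1) * (3 * v + 2)`, so the minimiser `β = 1 - 1 / v` is positive
exactly when `2 * k < r`.
-/

/-- The real part, as a function of the momentum `β`, of the eigenvalue of the heavy ball Jacobian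
with step size `h` that corresponds to an eigenvalue `λ` of the gradient descent-ascent Jacobian,
where `r = -Re λ` and `D = (Im λ)² - (Re λ)²`. -/
noncomputable def heavyBallRealPart (r D h β : ℝ) : ℝ :=
  -r / (1 - β) + h * (1 + β) * D / (2 * (1 - β) ^ 3)

/-- The polynomial that `heavyBallRealPart r D h` becomes in the variable `u = (1 - β)⁻¹`, with
`k = h * D`. -/
noncomputable def heavyBallCubic (r k u : ℝ) : ℝ :=
  k * u ^ 3 - k / 2 * u ^ 2 - r * u

theorem heavyBallRealPart_eq_heavyBallCubic (r D h : ℝ) {β : ℝ} (hβ : β ≠ 1) :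
    heavyBallRealPart r D h β = heavyBallCubic r (h * D) (1 - β)⁻¹ := by
  have hβ' : 1 - β ≠ 0 := sub_ne_zero.2 hβ.symm
  unfold heavyBallRealPart heavyBallCubic
  field_simp
  ring

theorem hasDerivAt_heavyBallCubic (r k u : ℝ) :
    HasDerivAt (heavyBallCubic r k) (3 * k * u ^ 2 - k * u - r) u := by
  have hcubic := (((hasDerivAt_pow 3 u).const_mul k).sub
    ((hasDerivAt_pow 2 u).const_mul (k / 2))).sub ((hasDerivAt_id u).const_mul r)
  exact hcubic.congr_deriv (by norm_num; ring)

theorem deriv_heavyBallCubic (r k u : ℝ) :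
    deriv (heavyBallCubic r k) u = 3 * k * u ^ 2 - k * u - r :=
  (hasDerivAt_heavyBallCubic r k u).deriv

theorem heavyBallCubic_sub_of_deriv_eq_zero {r k v : ℝ}
    (hv : deriv (heavyBallCubic r k) v = 0) (u : ℝ) :
    heavyBallCubic r k u - heavyBallCubic r k v = k * (u - v) ^ 2 * (u + 2 * v - 1 / 2) := by
  rw [deriv_heavyBallCubic] at hv
  unfold heavyBallCubic
  linear_combination (u - v) * hv

theorem heavyBallCubic_lt_of_deriv_eq_zero {r k u v : ℝ} (hk : 0 < k) (hv : 1 / 4 ≤ v)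
    (hderiv : deriv (heavyBallCubic r k) v = 0) (hu : 0 < u) (huv : u ≠ v) :
    heavyBallCubic r k v < heavyBallCubic r k u := by
  rw [← sub_pos, heavyBallCubic_sub_of_deriv_eq_zero hderiv]
  have hsq : 0 < (u - v) ^ 2 := sq_pos_of_ne_zero (sub_ne_zero.2 huv)
  have hfactor : 0 < u + 2 * v - 1 / 2 := by linarith
  exact mul_pos (mul_pos hk hsq) hfactor

theorem exists_deriv_heavyBallCubic_eq_zero {r k : ℝ} (hk : 0 < k) (hr : -k / 16 ≤ r) :
    ∃ v, 1 / 4 ≤ v ∧ deriv (heavyBallCubic r k) v = 0 := by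
  have hdiscrim : (k / 2) ^ 2 ≤ discrim (3 * k) (-k) (-r) := by
    have hgap : 0 ≤ 12 * k * (r - -k / 16) := mul_nonneg (by positivity) (sub_nonneg.2 hr)
    unfold discrim
    linear_combination hgap
  have hsqrt : k / 2 ≤ √(discrim (3 * k) (-k) (-r)) := Real.le_sqrt_of_sq_le hdiscrim
  refine ⟨(-(-k) + √(discrim (3 * k) (-k) (-r))) / (2 * (3 * k)), ?_, ?_⟩
  · rw [le_div_iff₀ (by positivity)]
    linarith
  · have hroot := (quadratic_eq_zero_iff (by positivity)
      (Real.mul_self_sqrt ((sq_nonneg _).trans hdiscrim)).symm _).2 (Or.inl rfl)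
    rw [deriv_heavyBallCubic]
    linear_combination hroot

theorem one_lt_iff_of_deriv_heavyBallCubic_eq_zero {r k v : ℝ} (hk : 0 < k) (hv : 0 < v)
    (hderiv : deriv (heavyBallCubic r k) v = 0) : 1 < v ↔ 2 * k < r := by
  rw [deriv_heavyBallCubic] at hderiv
  have hfactor : r - 2 * k = (v - 1) * (k * (3 * v + 2)) := by linear_combination -hderiv
  rw [← sub_pos, ← sub_pos (a := r), hfactor, mul_pos_iff_of_pos_right (by positivity)]

theorem stmt_9_general {r D h : ℝ} (hD : 0 < D) (hh : 0 < h) (hr : -(h * D) / 16 ≤ r) :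
    ∃ βs < 1, (0 < βs ↔ h < r / (2 * D)) ∧
      ∀ β < 1, β ≠ βs → heavyBallRealPart r D h βs < heavyBallRealPart r D h β := by
  have hk : 0 < h * D := mul_pos hh hD
  obtain ⟨v, hv, hderiv⟩ := exists_deriv_heavyBallCubic_eq_zero hk hr
  have hv_pos : 0 < v := by linarith
  have hβs : 1 - v⁻¹ < 1 := sub_lt_self 1 (inv_pos.2 hv_pos)
  refine ⟨1 - v⁻¹, hβs, ?_, fun β hβ hne => ?_⟩
  · rw [sub_pos, inv_lt_one₀ hv_pos, one_lt_iff_of_deriv_heavyBallCubic_eq_zero hk hv_pos hderiv,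
      lt_div_iff₀ (by positivity), mul_left_comm]
  · have hu_ne : (1 - β)⁻¹ ≠ v := by
      rintro rfl
      exact hne (by rw [inv_inv, sub_sub_cancel])
    rw [heavyBallRealPart_eq_heavyBallCubic r D h hβs.ne,
      heavyBallRealPart_eq_heavyBallCubic r D h hβ.ne, sub_sub_cancel, inv_inv]
    exact heavyBallCubic_lt_of_deriv_eq_zero hk hv hderiv (inv_pos.2 (sub_pos.2 hβ)) hu_ne

/-- Theorem 4.5 of the paper: for step sizes h < r/(2D), the function
g(β) = -r/(1-β) + h(1+β)D/(2(1-β)³) attains a strict global minimum on (-1,1) at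
a strictly positive point. -/
theorem stmt_9 (r D h : ℝ) (hr : 0 < r) (hD : 0 < D) (hh₁ : 0 < h)
    (hh₂ : h < r / (2 * D))
    (g : ℝ → ℝ)
    (hg : g = fun β => -r / (1 - β) + h * (1 + β) * D / (2 * (1 - β) ^ 3)) :
    ∃ βs ∈ Set.Ioo (0 : ℝ) 1, ∀ β ∈ Set.Ioo (-1 : ℝ) 1, β ≠ βs → g βs < g β := by
  obtain ⟨βs, hβs, hpos, hmin⟩ :=
    stmt_9_general hD hh₁ (show -(h * D) / 16 ≤ r by linarith [mul_pos hh₁ hD])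
  exact hg ▸ ⟨βs, ⟨hpos.2 hh₂, hβs⟩, fun β hβ => hmin β hβ.2⟩
end
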